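/- arXiv:2406.14587 — 3 statements merged into one kernel-verified Lean document; each statement's English description precedes it below -/
import Mathlib

section
/- In the 3-player deterministic graphical game described in the context, merge the three cyclic outcomes into a single outcome c, i.e., define g'(x) = a1 or a2 if the play p(x) reaches that terminal, and g'(x) = c if the play cycles. Then for every triple of strict linear orders ≻₁, ≻₂, ≻₃ on the merged outcome set {a1, a2, c}, the merged game has a Nash equilibrium: there is a strategy profile x such that no player i can obtain an outcome strictly preferred under ≻ᵢ by unilaterally changing their own strategy. -/
/-- Vertices of the digraph of the main example. -/
inductive GVertex : Type
  | s1 | u1 | v1 | u2 | v2 | u3 | v3 | a1 | a2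
  deriving DecidableEq

/-- Merged outcomes: the two terminals `a1`, `a2` and a single cyclic outcome `c`
obtained by merging the three cyclic outcomes. -/
inductive MOutcome : Type
  | a1 | a2 | c
  deriving DecidableEq

/-- Strategies of player 1: a move at each of s1 (3 choices), u1 (2), v1 (2). -/
abbrev Strat1 := Fin 3 × Fin 2 × Fin 2
/-- Strategies of player 2: a move at each of u2 (2 choices), v2 (2). -/
abbrev Strat2 := Fin 2 × Fin 2
/-- Strategies of player 3: a move at each of u3 (2 choices), v3 (2). -/
abbrev Strat3 := Fin 2 × Fin 2

/-- The successor function on vertices defined by a strategy profile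
(terminals are fixed points). -/
def gstep (x : Strat1 × Strat2 × Strat3) : GVertex → GVertex
  | .s1 => if x.1.1 = 0 then .u2 else if x.1.1 = 1 then .v1 else .v2
  | .u1 => if x.1.2.1 = 0 then .u2 else .v1
  | .v1 => if x.1.2.2 = 0 then .u3 else .v2
  | .u2 => if x.2.1.1 = 0 then .u1 else .u3
  | .v2 => if x.2.1.2 = 0 then .v3 else .a1
  | .u3 => if x.2.2.1 = 0 then .v1 else .v3
  | .v3 => if x.2.2.2 = 0 then .v2 else .a2
  | .a1 => .a1
  | .a2 => .a2

/-- Classification of a vertex of the eventual periodic part of a play: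
after sufficiently many steps the play sits at a terminal or inside one of the
three 2-cycles {u1,u2}, {v1,u3}, {v2,v3}; all cyclic outcomes are merged
into the single outcome `c`.  (The value at `s1` is irrelevant: `s1` has no
incoming edges and is never a fixed point.) -/
def mclassify : GVertex → MOutcome
  | .s1 => .c
  | .u1 => .c
  | .u2 => .c
  | .v1 => .c
  | .u3 => .c
  | .v2 => .c
  | .v3 => .c
  | .a1 => .a1
  | .a2 => .a2

/-- The merged outcome of a strategy profile: the play starting at `s1` needs
at most 9 steps to enter its periodic part (a terminal loop or a 2-cycle). -/
def moutcome (x : Strat1 × Strat2 × Strat3) : MOutcome :=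
  mclassify ((gstep x)^[9] GVertex.s1)

/-!
The equilibrium keeps every vertex on its 2-cycle `u1 ⇄ u2`, `v1 ⇄ u3`, `v2 ⇄ v3` and starts with
`s1 → u2`. Each player, deviating alone, faces a terminal-free set of vertices that contains `s1`
and that the moves of the other two make impossible to leave:
* player 1: all nonterminal vertices, as the only gates to the terminals are `v2` and `v3`;
* player 2: `{s1, u1, u2, v1, u3}`, as both exits `u1` and `u3` of `u2` lead into it;
* player 3: `{s1, u1, u2}`, which contains no vertex of that player.

Hence the outcome is `c` whoever deviates, and no one can gain.
-/

section NashEquilibrium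

variable {A B C O : Type*}

/-- Nash equilibria of a 3-player game form `g` in which `pref i o o'` means that player `i`
strictly prefers `o` to `o'`; player `i` is indexed by `i - 1 : Fin 3`. -/
def IsNashEquilibrium (g : A × B × C → O) (pref : Fin 3 → O → O → Prop) (x : A × B × C) : Prop :=
  (∀ y1, ¬ pref 0 (g (y1, x.2)) (g x)) ∧
  (∀ y2, ¬ pref 1 (g (x.1, y2, x.2.2)) (g x)) ∧
  (∀ y3, ¬ pref 2 (g (x.1, x.2.1, y3)) (g x))

theorem isNashEquilibrium_of_deviations_eq {g : A × B × C → O} {pref : Fin 3 → O → O → Prop}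
    (hpref : ∀ i, Std.Irrefl (pref i)) {x : A × B × C}
    (h1 : ∀ y1, g (y1, x.2) = g x) (h2 : ∀ y2, g (x.1, y2, x.2.2) = g x)
    (h3 : ∀ y3, g (x.1, x.2.1, y3) = g x) : IsNashEquilibrium g pref x := by
  refine ⟨fun y1 => ?_, fun y2 => ?_, fun y3 => ?_⟩
  · rw [h1]
    exact (hpref 0).irrefl _
  · rw [h2]
    exact (hpref 1).irrefl _
  · rw [h3]
    exact (hpref 2).irrefl _

end NashEquilibrium

theorem mclassify_eq_c_iff {v : GVertex} : mclassify v = .c ↔ v ≠ .a1 ∧ v ≠ .a2 := by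
  cases v <;> decide

section Trapping

variable {x : Strat1 × Strat2 × Strat3}

theorem moutcome_eq_c_of_mapsTo {S : Set GVertex} (hS : Set.MapsTo (gstep x) S S)
    (hs1 : .s1 ∈ S) (ha1 : .a1 ∉ S) (ha2 : .a2 ∉ S) : moutcome x = .c := by
  have hmem : (gstep x)^[9] .s1 ∈ S := hS.iterate 9 hs1
  exact mclassify_eq_c_iff.2 ⟨ne_of_mem_of_not_mem hmem ha1, ne_of_mem_of_not_mem hmem ha2⟩

theorem gstep_u2_eq_or : gstep x .u2 = .u1 ∨ gstep x .u2 = .u3 := ite_eq_or_eq ..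

theorem moutcome_eq_c_of_v2_v3_cycle (hv2 : gstep x .v2 = .v3) (hv3 : gstep x .v3 = .v2) :
    moutcome x = .c := by
  refine moutcome_eq_c_of_mapsTo (S := {.a1, .a2}ᶜ) ?_ (by simp) (by simp) (by simp)
  intro v hv
  cases v with
  | a1 | a2 => simp at hv
  | v2 => simp [hv2]
  | v3 => simp [hv3]
  | s1 | u1 | v1 | u2 | u3 =>
    simp only [gstep]
    split_ifs <;> simp

theorem moutcome_eq_c_of_s1_u1_to_u2_of_v1_u3_cycle (hs1 : gstep x .s1 = .u2)
    (hu1 : gstep x .u1 = .u2) (hv1 : gstep x .v1 = .u3) (hu3 : gstep x .u3 = .v1) :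
    moutcome x = .c := by
  refine moutcome_eq_c_of_mapsTo (S := {.s1, .u1, .u2, .v1, .u3}) ?_ (by simp) (by simp) (by simp)
  rintro _ (rfl | rfl | rfl | rfl | rfl)
  · simp [hs1]
  · simp [hu1]
  · rcases gstep_u2_eq_or (x := x) with hu2 | hu2 <;> simp [hu2]
  · simp [hv1]
  · simp [hu3]

theorem moutcome_eq_c_of_s1_to_u2_of_u1_u2_cycle (hs1 : gstep x .s1 = .u2)
    (hu1 : gstep x .u1 = .u2) (hu2 : gstep x .u2 = .u1) : moutcome x = .c := by
  refine moutcome_eq_c_of_mapsTo (S := {.s1, .u1, .u2}) ?_ (by simp) (by simp) (by simp)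
  rintro _ (rfl | rfl | rfl)
  · simp [hs1]
  · simp [hu1]
  · simp [hu2]

end Trapping

/-- The profile `s1 → u2`, `u1 ⇄ u2`, `v1 ⇄ u3`, `v2 ⇄ v3`, the equilibrium for all preferences;
choice `0` is the move listed first at each vertex by `gstep`. -/
def cyclicProfile : Strat1 × Strat2 × Strat3 := ((0, 0, 0), (0, 0), (0, 0))

theorem moutcome_cyclicProfile : moutcome cyclicProfile = .c :=
  moutcome_eq_c_of_v2_v3_cycle rfl rfl

theorem moutcome_cyclicProfile_deviation1 (y1 : Strat1) : moutcome (y1, cyclicProfile.2) = .c :=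
  moutcome_eq_c_of_v2_v3_cycle rfl rfl

theorem moutcome_cyclicProfile_deviation2 (y2 : Strat2) :
    moutcome (cyclicProfile.1, y2, cyclicProfile.2.2) = .c :=
  moutcome_eq_c_of_s1_u1_to_u2_of_v1_u3_cycle rfl rfl rfl rfl

theorem moutcome_cyclicProfile_deviation3 (y3 : Strat3) :
    moutcome (cyclicProfile.1, cyclicProfile.2.1, y3) = .c :=
  moutcome_eq_c_of_s1_to_u2_of_u1_u2_cycle rfl rfl rfl

theorem merged_game_Nash_solvable_general :
    ∃ x : Strat1 × Strat2 × Strat3, ∀ pref : Fin 3 → MOutcome → MOutcome → Prop,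
      (∀ i, Std.Irrefl (pref i)) → IsNashEquilibrium moutcome pref x := by
  refine ⟨cyclicProfile, fun pref hpref => isNashEquilibrium_of_deviations_eq hpref ?_ ?_ ?_⟩ <;>
    rw [moutcome_cyclicProfile]
  · exact moutcome_cyclicProfile_deviation1
  · exact moutcome_cyclicProfile_deviation2
  · exact moutcome_cyclicProfile_deviation3

/-- After merging the three cyclic outcomes into one, the game of the main
example is Nash-solvable: for every triple of strict linear (i.e. strict total)
preference orders on the merged outcome set {a1, a2, c} there is a strategy
profile that no player can improve by a unilateral deviation. -/
theorem merged_game_Nash_solvable (pref : Fin 3 → MOutcome → MOutcome → Prop)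
    (hpref : ∀ i, IsStrictTotalOrder MOutcome (pref i)) :
    ∃ x : Strat1 × Strat2 × Strat3,
      (∀ y1 : Strat1, ¬ pref 0 (moutcome (y1, x.2)) (moutcome x)) ∧
      (∀ y2 : Strat2, ¬ pref 1 (moutcome (x.1, y2, x.2.2)) (moutcome x)) ∧
      (∀ y3 : Strat3, ¬ pref 2 (moutcome (x.1, x.2.1, y3)) (moutcome x)) := by
  obtain ⟨x, hx⟩ := merged_game_Nash_solvable_general
  exact ⟨x, hx pref fun i => (hpref i).toIrrefl⟩
end

section
/- Every 2-person deterministic graphical game has a Nash equilibrium in pure stationary strategies: for n = 2, for every DG game structure (G, partition, initial position v0) and every payoff u : {1,2} × Ω → ℝ, there exists a strategy profile x = (x₁, x₂) such that for each player i ∈ {1,2} and each profile x' differing from x only in player i's strategy, u(i, g(x)) ≥ u(i, g(x')). -/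
open Relation

/-- A vertex is terminal iff it has no outgoing edge. -/
def isTerminal {V : Type*} (E : V → V → Prop) (v : V) : Prop := ∀ w, ¬ E v w

/-- The strongly connected component of `v`: all vertices mutually reachable
with `v` (reachability = reflexive-transitive closure of `E`). -/
def scc {V : Type*} (E : V → V → Prop) (v : V) : Set V :=
  {w | ReflTransGen E v w ∧ ReflTransGen E w v}

/-- A strategy profile, encoded as a global successor function: at every
non-terminal position it follows an edge chosen by the controlling player,
and it fixes the terminal positions. -/
def ValidProfile {V : Type*} (E : V → V → Prop) (s : V → V) : Prop :=
  ∀ v, (isTerminal E v → s v = v) ∧ (¬ isTerminal E v → E v (s v))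

/-- The outcome of a strategy profile `s` from the initial position `v0`:
after `|V|` steps the play `v0, s v0, s (s v0), …` has entered its periodic
part (the terminal vertex reached, or the eventual directed cycle), and the
outcome is the strongly connected component containing it. -/
def outcome {V : Type*} [Fintype V] (E : V → V → Prop) (v0 : V) (s : V → V) :
    Set V :=
  scc E (s^[Fintype.card V] v0)

/-- `x` is a Nash equilibrium (in pure stationary strategies): no player `i`
can strictly increase their payoff by a unilateral deviation, i.e. by
switching to a valid profile that agrees with `x` at every position not
controlled by `i`. -/
def IsNE {V : Type*} [Fintype V] (E : V → V → Prop) {n : ℕ}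
    (control : V → Fin n) (v0 : V) (u : Fin n → Set V → ℝ) (x : V → V) : Prop :=
  ∀ (i : Fin n) (x' : V → V), ValidProfile E x' →
    (∀ v, control v ≠ i → x' v = x v) →
    u i (outcome E v0 x) ≥ u i (outcome E v0 x')

/-!
Tight two-person game forms are Nash-solvable: ordering the outcomes by increasing preference of the
row player, consider the sets of outcomes into which she can force the play, and make her play a
strategy that is lexicographically best in avoiding bad outcomes. Then each outcome `o` of her row
occurs in a column that offers her nothing better than `o`, and the outcome of this row which the
column player likes most is an equilibrium outcome.

The normal form of a deterministic graphical game is tight. Forcing the outcome into a set of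
strongly connected components amounts to visiting their union `G` infinitely often, because a play
following stationary strategies eventually stays in one component. So tightness is the positional
determinacy of Büchi games: by comparing nested fixed points, every vertex carries a progress
measure either for visiting `G` infinitely often or, for the opponent, for visiting it finitely
often.
-/

section TightGameForms

variable {X Y Ω α β : Type*} {g : X → Y → Ω}

/-- Tightness of a two-person game form `g`: for every set `S` of outcomes, either the row player
can force the outcome into `S`, or the column player can force it out of `S`. -/
def IsTight (g : X → Y → Ω) : Prop :=
  ∀ S : Set Ω, (∃ x, ∀ y, g x y ∈ S) ∨ ∃ y, ∀ x, g x y ∉ S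

theorem IsTight.exists_forall_exists_le [LinearOrder Ω] [Finite Ω] [Nonempty X] (hg : IsTight g) :
    ∃ x, ∀ y, ∃ y', g x y' = g x y ∧ ∀ x', g x y ≤ g x' y' := by
  cases nonempty_fintype Ω
  -- Let `D` be colexicographically least among the sets of outcomes that can be forced. Replacing
  -- `o = g x y` in `D` by everything below `o`, and deleting nothing above `o`, yields a smaller
  -- set `D'`, so some column avoids `D'`; that column meets `D` in `o` only.
  obtain ⟨D, ⟨x, hx⟩, hD⟩ := Set.exists_min_image
    {D : Finset Ω | ∃ x, ∀ y, g x y ∈ D} toColex (Set.toFinite _)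
    ⟨Finset.univ, Classical.arbitrary X, fun _ => Finset.mem_univ _⟩
  refine ⟨x, fun y => ?_⟩
  let D' : Finset Ω := {w | w < g x y ∨ (w ∈ D ∧ g x y < w)}
  have hlt : toColex D' < toColex D := by
    refine Finset.Colex.toColex_lt_toColex.2 ⟨fun h => ?_, fun w hw hwD => ?_⟩
    · have hmem : g x y ∈ D' := h ▸ hx y
      simp [D'] at hmem
    · refine ⟨g x y, hx y, by simp [D'], ?_⟩
      rcases (Finset.mem_filter.1 hw).2 with h | h
      exacts [h.le, absurd h.1 hwD]
  obtain ⟨y', hy'⟩ := (hg D').resolve_left fun h => (hD _ h).not_gt hlt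
  have hle (x' : X) : g x y ≤ g x' y' := not_lt.1 fun h => hy' x' (by simp [D', h])
  exact ⟨y', (hle x).antisymm' (not_lt.1 fun h => hy' x (by simp [D', h, hx y'])), hle⟩

theorem exists_linearOrder_monotone [LinearOrder α] (u : Ω → α) :
    ∃ _ : LinearOrder Ω, Monotone u := by
  let lex : Ω → α ×ₗ Ω := fun w => toLex (u w, w)
  classical
  let _ : LinearOrder Ω := linearOrderOfSTO WellOrderingRel
  exact ⟨LinearOrder.lift' lex fun _ _ h => congrArg (fun p => (ofLex p).2) h,
    fun _ _ h => Prod.Lex.monotone_fst _ _ h⟩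

theorem IsTight.exists_nash [Finite Ω] [LinearOrder α] [LinearOrder β] [Nonempty X] [Nonempty Y]
    (hg : IsTight g) (u₁ : Ω → α) (u₂ : Ω → β) :
    ∃ x y, (∀ x', u₁ (g x' y) ≤ u₁ (g x y)) ∧ ∀ y', u₂ (g x y') ≤ u₂ (g x y) := by
  obtain ⟨_, hu₁⟩ := exists_linearOrder_monotone (OrderDual.toDual ∘ u₁)
  obtain ⟨x, hx⟩ := hg.exists_forall_exists_le
  obtain ⟨_, ⟨y, rfl⟩, hmax⟩ :=
    Set.exists_max_image (Set.range (g x)) u₂ (Set.toFinite _) (Set.range_nonempty _)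
  obtain ⟨y', heq, hle⟩ := hx y
  refine ⟨x, y', fun x' => ?_, fun z => ?_⟩
  · rw [heq]
    exact hu₁ (hle x')
  · rw [heq]
    exact hmax _ ⟨z, rfl⟩

end TightGameForms

theorem exists_rank_lfp {α : Type*} [Finite α] (F : Set α →o Set α) :
    ∃ ρ : α → ℕ, ∀ k, F {a ∈ F.lfp | ρ a < k} = {a ∈ F.lfp | ρ a ≤ k} := by
  let A (n : ℕ) : Set α := F^[n] ∅
  have hA : Monotone A := F.monotone.monotone_iterate_of_le_map (Set.empty_subset _)
  have hA_succ (n : ℕ) : A (n + 1) = F (A n) := Function.iterate_succ_apply' F n ∅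
  have hA_le (n : ℕ) : A n ⊆ F.lfp := by
    induction n with
    | zero => exact Set.empty_subset _
    | succ n ih => exact (hA_succ n).trans_le (F.map_le_lfp ih)
  obtain ⟨N, hN⟩ := WellFoundedGT.monotone_chain_condition ⟨A, hA⟩
  have hlfp_le : F.lfp ⊆ A (N + 1) := by
    have hfix : F (A N) = A N := (hA_succ N).symm.trans (hN (N + 1) N.le_succ).symm
    exact (F.lfp_le_fixed hfix).trans (hA N.le_succ)
  let ρ (a : α) : ℕ := sInf {n | a ∈ A (n + 1)}
  have hstage (k : ℕ) : {a ∈ F.lfp | ρ a < k} = A k := by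
    ext a
    constructor
    · rintro ⟨ha, hk⟩
      have hmem : a ∈ A (ρ a + 1) := Nat.sInf_mem (s := {n | a ∈ A (n + 1)}) ⟨N, hlfp_le ha⟩
      exact hA hk hmem
    · intro ha
      cases k with
      | zero => exact ha.elim
      | succ j => exact ⟨hA_le _ ha, Nat.lt_succ_of_le (Nat.sInf_le ha)⟩
  refine ⟨ρ, fun k => ?_⟩
  rw [hstage, ← hA_succ, ← hstage]
  simp only [Nat.lt_succ_iff]

section BuchiGames

open Filter

variable {V : Type*} {R : V → V → Prop} {P G W : Set V}

/-- Controllable predecessors of `S`: the vertices from which the player owning `P` can make sure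
that the next vertex lies in `S`, for moves along `R`. -/
def cpre (R : V → V → Prop) (P : Set V) : Set V →o Set V where
  toFun S := {v | (v ∈ P ∧ ∃ w ∈ S, R v w) ∨ (v ∉ P ∧ ∀ w, R v w → w ∈ S)}
  monotone' _ _ h _ := Or.imp (And.imp_right fun ⟨w, hw, hR⟩ => ⟨w, h hw, hR⟩)
    (And.imp_right fun hall w hR => h (hall w hR))

theorem mem_cpre {S : Set V} {v : V} :
    v ∈ cpre R P S ↔ (v ∈ P ∧ ∃ w ∈ S, R v w) ∨ (v ∉ P ∧ ∀ w, R v w → w ∈ S) :=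
  Iff.rfl

theorem mem_cpre_of_subset {S T : Set V} {v : V} (h : S ⊆ T) (hv : v ∈ cpre R P S) :
    v ∈ cpre R P T :=
  (cpre R P).monotone h hv

theorem compl_cpre (R : V → V → Prop) (P S : Set V) : (cpre R P S)ᶜ = cpre R Pᶜ Sᶜ := by
  ext v
  by_cases hv : v ∈ P <;> simp [mem_cpre, hv, and_comm]

/-- The player owning `P` has a stationary strategy `s` such that every profile of moves along `R`
that follows `s` on `P` satisfies `Φ`. Strategies are encoded as full profiles `s`, of which only
the restriction to `P` matters. -/
def CanEnforce (R : V → V → Prop) (P : Set V) (Φ : (V → V) → Prop) : Prop :=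
  ∃ s : V → V, (∀ v, R v (s v)) ∧ ∀ x : V → V, (∀ v, R v (x v)) → Set.EqOn x s P → Φ x

theorem canEnforce_of_mem_cpre (hR : ∀ v, ∃ w, R v w) (P : Set V) (N : V → Set V) :
    CanEnforce R P fun x => ∀ v, v ∈ cpre R P (N v) → x v ∈ N v := by
  have hmove (v : V) : ∃ w, R v w ∧ (v ∈ P → v ∈ cpre R P (N v) → w ∈ N v) := by
    by_cases h : v ∈ P ∧ v ∈ cpre R P (N v)
    · obtain ⟨w, hw, hRw⟩ := (h.2.resolve_right fun h' => h'.1 h.1).2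
      exact ⟨w, hRw, fun _ _ => hw⟩
    · exact (hR v).imp fun w hRw => ⟨hRw, fun h₁ h₂ => (h ⟨h₁, h₂⟩).elim⟩
  choose s hRs hs using hmove
  refine ⟨s, hRs, fun x hRx hxs v hv => ?_⟩
  by_cases hP : v ∈ P
  · rw [hxs hP]
    exact hs v hP hv
  · exact (hv.resolve_left fun h => hP h.1).2 _ (hRx v)

/-- A progress measure witnessing that the player owning `P`, starting in `W`, can visit `G`
infinitely often: the rank decreases until `G` is reached. -/
def IsBuchiCertificate (R : V → V → Prop) (P G W : Set V) : Prop :=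
  ∃ ρ : V → ℕ, ∀ v ∈ W, v ∈ cpre R P {w ∈ W | v ∉ G → ρ w < ρ v}

/-- A progress measure witnessing that the player owning `P`, starting in `W`, can visit `G` only
finitely often: the rank never increases, and it decreases at each visit to `G`. -/
def IsCoBuchiCertificate (R : V → V → Prop) (P G W : Set V) : Prop :=
  ∃ ρ : V → ℕ, ∀ v ∈ W, v ∈ cpre R P {w ∈ W | ρ w ≤ ρ v ∧ (v ∈ G → ρ w < ρ v)}

theorem IsBuchiCertificate.canEnforce (hR : ∀ v, ∃ w, R v w)
    (hW : IsBuchiCertificate R P G W) :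
    CanEnforce R P fun x => ∀ v ∈ W, ∃ᶠ n in atTop, x^[n] v ∈ G := by
  obtain ⟨ρ, hρ⟩ := hW
  obtain ⟨s, hRs, hs⟩ := canEnforce_of_mem_cpre hR P fun v => {w ∈ W | v ∉ G → ρ w < ρ v}
  refine ⟨s, hRs, fun x hRx hxs v hv => ?_⟩
  have hstep (w : V) (hw : w ∈ W) : x w ∈ W ∧ (w ∉ G → ρ (x w) < ρ w) :=
    hs x hRx hxs w (hρ w hw)
  have hmaps : Set.MapsTo x W W := fun w hw => (hstep w hw).1
  refine frequently_atTop.2 fun m => ?_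
  by_contra! hG
  refine not_strictAnti_of_wellFoundedLT (fun n => ρ (x^[m + n] v))
    (strictAnti_nat_of_succ_lt fun n => ?_)
  rw [← add_assoc, Function.iterate_succ_apply']
  exact (hstep _ (hmaps.iterate _ hv)).2 (hG _ (m.le_add_right n))

theorem IsCoBuchiCertificate.canEnforce (hR : ∀ v, ∃ w, R v w)
    (hW : IsCoBuchiCertificate R P G W) :
    CanEnforce R P fun x => ∀ v ∈ W, ∀ᶠ n in atTop, x^[n] v ∉ G := by
  obtain ⟨ρ, hρ⟩ := hW
  obtain ⟨s, hRs, hs⟩ :=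
    canEnforce_of_mem_cpre hR P fun v => {w ∈ W | ρ w ≤ ρ v ∧ (v ∈ G → ρ w < ρ v)}
  refine ⟨s, hRs, fun x hRx hxs v hv => ?_⟩
  have hstep (w : V) (hw : w ∈ W) : x w ∈ W ∧ ρ (x w) ≤ ρ w ∧ (w ∈ G → ρ (x w) < ρ w) :=
    hs x hRx hxs w (hρ w hw)
  have hmaps : Set.MapsTo x W W := fun w hw => (hstep w hw).1
  have hanti : Antitone fun n => ρ (x^[n] v) := antitone_nat_of_succ_le fun n => by
    rw [Function.iterate_succ_apply']
    exact (hstep _ (hmaps.iterate n hv)).2.1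
  obtain ⟨N, hN⟩ := WellFoundedLT.antitone_chain_condition hanti
  filter_upwards [eventually_ge_atTop N] with n hn hG
  have hlt := (hstep _ (hmaps.iterate n hv)).2.2 hG
  rw [← Function.iterate_succ_apply' x] at hlt
  exact hlt.ne ((hN _ (hn.trans n.le_succ)).symm.trans (hN n hn))

/-- The vertices from which the player owning `P` can forever either stay outside `G` or, when
visiting `G`, move into `Z`. The least fixed point is her winning region for visiting `G` only
finitely often. -/
def coBuchiStep (R : V → V → Prop) (P G : Set V) : Set V →o Set V where
  toFun Z := (OrderHom.const _ (Gᶜ ∪ cpre R P Z) ⊓ cpre R P).gfp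
  monotone' _ _ h := OrderHom.gfp.monotone <|
    inf_le_inf_right _ fun _ => Set.union_subset_union_right _ ((cpre R P).monotone h)

theorem coBuchiStep_eq (R : V → V → Prop) (P G Z : Set V) :
    coBuchiStep R P G Z = (Gᶜ ∪ cpre R P Z) ∩ cpre R P (coBuchiStep R P G Z) :=
  (OrderHom.map_gfp (OrderHom.const _ (Gᶜ ∪ cpre R P Z) ⊓ cpre R P)).symm

theorem subset_coBuchiStep {Z Q : Set V} (hQ : Q ⊆ (Gᶜ ∪ cpre R P Z) ∩ cpre R P Q) :
    Q ⊆ coBuchiStep R P G Z :=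
  OrderHom.le_gfp (OrderHom.const _ (Gᶜ ∪ cpre R P Z) ⊓ cpre R P) hQ

theorem isCoBuchiCertificate_lfp_coBuchiStep [Finite V] (R : V → V → Prop)
    (P G : Set V) :
    IsCoBuchiCertificate R P G (coBuchiStep R P G).lfp := by
  obtain ⟨ρ, hρ⟩ := exists_rank_lfp (coBuchiStep R P G)
  refine ⟨ρ, fun v hv => ?_⟩
  have hmem : v ∈ {w ∈ (coBuchiStep R P G).lfp | ρ w ≤ ρ v} := ⟨hv, le_rfl⟩
  rw [← hρ, coBuchiStep_eq, hρ] at hmem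
  obtain ⟨hG | hlt, hle⟩ := hmem
  · exact mem_cpre_of_subset (fun w hw => ⟨hw.1, hw.2, fun h => (hG h).elim⟩) hle
  · exact mem_cpre_of_subset (fun w hw => ⟨hw.1, hw.2.le, fun _ => hw.2⟩) hlt

theorem exists_isBuchiCertificate_compl_lfp_subset [Finite V] (R : V → V → Prop) (P G : Set V) :
    ∃ W, IsBuchiCertificate R P G W ∧ (coBuchiStep R Pᶜ G).lfpᶜ ⊆ W := by
  set Z := (coBuchiStep R Pᶜ G).lfp
  -- `F.lfp` is the attractor to the vertices of `G` from which the Büchi player can stay outside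
  -- `Z`. Its complement satisfies the greatest fixed point equation of `coBuchiStep`, hence lies
  -- in `Z`.
  let F : Set V →o Set V := OrderHom.const _ (G ∩ cpre R P Zᶜ) ⊔ cpre R P
  have hF : F.lfp = (G ∩ cpre R P Zᶜ) ∪ cpre R P F.lfp := F.map_lfp.symm
  have hsub : Zᶜ ⊆ F.lfp := by
    have hpost : F.lfpᶜ = (Gᶜ ∪ cpre R Pᶜ Z) ∩ cpre R Pᶜ F.lfpᶜ := by
      conv_lhs => rw [hF]
      rw [Set.compl_union, Set.compl_inter, compl_cpre, compl_cpre, compl_compl]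
    exact Set.compl_subset_comm.1
      ((subset_coBuchiStep hpost.subset).trans (OrderHom.map_lfp _).subset)
  refine ⟨F.lfp, ?_, hsub⟩
  obtain ⟨ρ, hρ⟩ := exists_rank_lfp F
  refine ⟨ρ, fun v hv => ?_⟩
  have hmem : v ∈ F {w ∈ F.lfp | ρ w < ρ v} := by
    rw [hρ]
    exact ⟨hv, le_rfl⟩
  rcases hmem with ⟨hG, hv⟩ | hlt
  · exact mem_cpre_of_subset (fun w hw => ⟨hsub hw, fun h => (h hG).elim⟩) hv
  · exact mem_cpre_of_subset (fun w hw => ⟨hw.1, fun _ => hw.2⟩) hlt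

theorem canEnforce_frequently_mem_or_eventually_notMem [Finite V] (hR : ∀ v, ∃ w, R v w)
    (P G : Set V) (v : V) :
    CanEnforce R P (fun x => ∃ᶠ n in atTop, x^[n] v ∈ G) ∨
      CanEnforce R Pᶜ fun x => ∀ᶠ n in atTop, x^[n] v ∉ G := by
  obtain ⟨W, hW, hsub⟩ := exists_isBuchiCertificate_compl_lfp_subset R P G
  by_cases hv : v ∈ (coBuchiStep R Pᶜ G).lfp
  · obtain ⟨t, ht, hwin⟩ := (isCoBuchiCertificate_lfp_coBuchiStep R Pᶜ G).canEnforce hR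
    exact .inr ⟨t, ht, fun x hx hxt => hwin x hx hxt v hv⟩
  · obtain ⟨s, hs, hwin⟩ := hW.canEnforce hR
    exact .inl ⟨s, hs, fun x hx hxs => hwin x hx hxs v (hsub hv)⟩

end BuchiGames

section Plays

open Filter

variable {V : Type*} {E : V → V → Prop} {x : V → V}

theorem iterate_card_mem_periodicPts [Fintype V] (x : V → V) (v : V) :
    x^[Fintype.card V] v ∈ Function.periodicPts x := by
  obtain ⟨i, j, hij, heq⟩ : ∃ i j : Fin (Fintype.card V + 1), i < j ∧ x^[i] v = x^[j] v := by
    obtain ⟨i, j, hne, heq⟩ := Fintype.exists_ne_map_eq_of_card_lt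
      (fun i : Fin (Fintype.card V + 1) => x^[i] v) (by simp)
    rcases hne.lt_or_gt with h | h
    exacts [⟨i, j, h, heq⟩, ⟨j, i, h, heq.symm⟩]
  have hper : Function.IsPeriodicPt x (j - i) (x^[i] v) := by
    rw [Function.IsPeriodicPt, Function.IsFixedPt, ← Function.iterate_add_apply,
      Nat.sub_add_cancel (Fin.le_def.1 hij.le), heq]
  have hper' := hper.apply_iterate (Fintype.card V - i)
  rw [← Function.iterate_add_apply, Nat.sub_add_cancel i.is_le] at hper'
  exact Function.mk_mem_periodicPts (Nat.sub_pos_of_lt hij) hper'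

theorem exists_iterate_iterate_eq_of_mem_periodicPts {v : V} (hv : v ∈ Function.periodicPts x)
    (n : ℕ) : ∃ k, x^[k] (x^[n] v) = v := by
  obtain ⟨p, hp, hper⟩ := hv
  refine ⟨n * p - n, ?_⟩
  rw [← Function.iterate_add_apply, Nat.sub_add_cancel (Nat.le_mul_of_pos_right n hp)]
  exact hper.const_mul n

theorem scc_eq_of_reflTransGen {v w : V} (hvw : ReflTransGen E v w) (hwv : ReflTransGen E w v) :
    scc E v = scc E w :=
  Set.ext fun _ => ⟨fun h => ⟨hwv.trans h.1, h.2.trans hvw⟩,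
    fun h => ⟨hvw.trans h.1, h.2.trans hwv⟩⟩

/-- The moves of the game with a loop added at each terminal vertex, so that every vertex has a
successor and valid profiles are exactly the functions following moves. -/
def Move (E : V → V → Prop) (v w : V) : Prop :=
  E v w ∨ (isTerminal E v ∧ w = v)

theorem exists_move (E : V → V → Prop) (v : V) : ∃ w, Move E v w := by
  by_cases h : isTerminal E v
  · exact ⟨v, .inr ⟨h, rfl⟩⟩
  · obtain ⟨w, hw⟩ := not_forall_not.1 h
    exact ⟨w, .inl hw⟩

theorem validProfile_iff_forall_move : ValidProfile E x ↔ ∀ v, Move E v (x v) := by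
  refine forall_congr' fun v => ?_
  by_cases h : isTerminal E v
  · simp [Move, h, h (x v)]
  · simp [Move, h]

theorem exists_validProfile (E : V → V → Prop) : ∃ x, ValidProfile E x := by
  choose x hx using exists_move E
  exact ⟨x, validProfile_iff_forall_move.2 hx⟩

theorem ValidProfile.piecewise {s t : V → V} (hs : ValidProfile E s) (ht : ValidProfile E t)
    (P : Set V) [DecidablePred (· ∈ P)] : ValidProfile E (P.piecewise s t) := by
  intro v
  by_cases hv : v ∈ P
  · simpa only [Set.piecewise_eq_of_mem _ _ _ hv] using hs v
  · simpa only [Set.piecewise_eq_of_notMem _ _ _ hv] using ht v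

theorem ValidProfile.reflTransGen_iterate (hx : ValidProfile E x) (v : V) (n : ℕ) :
    ReflTransGen E v (x^[n] v) := by
  induction n with
  | zero => exact .refl
  | succ n ih =>
    rw [Function.iterate_succ_apply']
    rcases validProfile_iff_forall_move.1 hx (x^[n] v) with h | ⟨-, h⟩
    · exact ih.tail h
    · rwa [h]

theorem ValidProfile.eventually_scc_iterate_eq_outcome [Fintype V] (hx : ValidProfile E x)
    (v₀ : V) : ∀ᶠ n in atTop, scc E (x^[n] v₀) = outcome E v₀ x := by
  filter_upwards [eventually_ge_atTop (Fintype.card V)] with n hn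
  obtain ⟨m, rfl⟩ := Nat.exists_eq_add_of_le' hn
  rw [Function.iterate_add_apply]
  obtain ⟨k, hk⟩ :=
    exists_iterate_iterate_eq_of_mem_periodicPts (iterate_card_mem_periodicPts x v₀) m
  have hback := hx.reflTransGen_iterate (x^[m] (x^[Fintype.card V] v₀)) k
  rw [hk] at hback
  exact scc_eq_of_reflTransGen hback (hx.reflTransGen_iterate _ m)

end Plays

section NashEquilibria

variable {V : Type*} [Fintype V]

theorem isTight_outcome_piecewise (E : V → V → Prop) (P : Set V) [DecidablePred (· ∈ P)]
    (v₀ : V) :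
    IsTight fun s t : {x // ValidProfile E x} => outcome E v₀ (P.piecewise s.1 t.1) := by
  intro S
  rcases canEnforce_frequently_mem_or_eventually_notMem (exists_move E) P {v | scc E v ∈ S} v₀ with
    ⟨s, hs, hwin⟩ | ⟨t, ht, hwin⟩
  · refine .inl ⟨⟨s, validProfile_iff_forall_move.2 hs⟩, fun t => ?_⟩
    have hvalid := (validProfile_iff_forall_move.2 hs).piecewise t.2 P
    have hfreq := hwin _ (validProfile_iff_forall_move.1 hvalid) (P.piecewise_eqOn s t)
    obtain ⟨n, hn, heq⟩ :=
      (hfreq.and_eventually (hvalid.eventually_scc_iterate_eq_outcome v₀)).exists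
    exact heq.subst (motive := (· ∈ S)) hn
  · refine .inr ⟨⟨t, validProfile_iff_forall_move.2 ht⟩, fun s => ?_⟩
    have hvalid := s.2.piecewise (validProfile_iff_forall_move.2 ht) P
    have hev := hwin _ (validProfile_iff_forall_move.1 hvalid) (P.piecewise_eqOn_compl s t)
    obtain ⟨n, hn, heq⟩ := (hev.and (hvalid.eventually_scc_iterate_eq_outcome v₀)).exists
    exact heq.subst (motive := (· ∉ S)) hn

theorem isNE_piecewise {E : V → V → Prop} {control : V → Fin 2} {v₀ : V}
    {u : Fin 2 → Set V → ℝ} {s t : V → V} [DecidablePred (· ∈ {v | control v = 0})]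
    (hs : ∀ s', ValidProfile E s' → u 0 (outcome E v₀ ({v | control v = 0}.piecewise s' t)) ≤
      u 0 (outcome E v₀ ({v | control v = 0}.piecewise s t)))
    (ht : ∀ t', ValidProfile E t' → u 1 (outcome E v₀ ({v | control v = 0}.piecewise s t')) ≤
      u 1 (outcome E v₀ ({v | control v = 0}.piecewise s t))) :
    IsNE E control v₀ u ({v | control v = 0}.piecewise s t) := by
  intro i x' hx' hagree
  match i with
  | 0 =>
    have hx'_eq : {v | control v = 0}.piecewise x' t = x' := by
      funext v
      by_cases hv : control v = 0 <;> simp [hv, hagree]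
    simpa only [hx'_eq] using hs x' hx'
  | 1 =>
    have hx'_eq : {v | control v = 0}.piecewise s x' = x' := by
      funext v
      by_cases hv : control v = 0 <;> simp [hv, hagree]
    simpa only [hx'_eq] using ht x' hx'

end NashEquilibria

/-- Every 2-person deterministic graphical game has a Nash equilibrium in
pure stationary strategies. -/
theorem two_person_DG_game_Nash_solvable {V : Type*} [Fintype V]
    (E : V → V → Prop) (control : V → Fin 2) (v0 : V)
    (hv0 : ¬ isTerminal E v0) (u : Fin 2 → Set V → ℝ) :
    ∃ x : V → V, ValidProfile E x ∧ IsNE E control v0 u x := by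
  classical
  have : Nonempty {x // ValidProfile E x} := nonempty_subtype.2 (exists_validProfile E)
  obtain ⟨s, t, hs, ht⟩ :=
    (isTight_outcome_piecewise E {v | control v = 0} v0).exists_nash (u 0) (u 1)
  exact ⟨_, s.2.piecewise t.2 _,
    isNE_piecewise (fun s' hs' => hs ⟨s', hs'⟩) fun t' ht' => ht ⟨t', ht'⟩⟩
end

section
/- Deleting the worse of two terminal moves creates no new Nash equilibrium: let a DG game with payoff u have a position v ∈ Vᵢ with two edges (v, t), (v, t') ∈ E where t and t' are terminal vertices and u(i, t) > u(i, t'). Let the reduced game be obtained by deleting the edge (v, t') (the vertex v retains the outgoing edge (v, t), all other data unchanged). Then every Nash equilibrium of the reduced game is also a Nash equilibrium of the original game. In particular, if the original game is NE-free, so is the reduced game. -/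
open Relation

/-!
Terminal positions have no outgoing edges, so deleting an edge `(v, t')` into a terminal position
changes no strongly connected component, and the profiles of the reduced game are exactly those of
the original game that do not move from `v` to `t'`. Suppose a deviation does move from `v` to
`t'`; redirect it from `v` to `t`. Either the play avoids `v` and its outcome is unchanged, or its
outcome changes from `t'` to `t`, which the player controlling `v` likes at least as much. So a
profitable deviation in the original game yields a profitable deviation in the reduced game.
-/

/-- The edge relation of the game obtained from `E` by deleting the edge `(v, w)`. -/
def deleteEdge {V : Type*} (E : V → V → Prop) (v w : V) : V → V → Prop :=
  fun a b => E a b ∧ ¬ (a = v ∧ b = w)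

section DeleteEdge

variable {V : Type*} {E : V → V → Prop} {v w : V}

theorem deleteEdge_le (E : V → V → Prop) (v w : V) : deleteEdge E v w ≤ E :=
  fun _ _ hab => hab.1

theorem reflTransGen_deleteEdge_of_ne (hw : isTerminal E w) {a b : V}
    (hab : ReflTransGen E a b) (hb : b ≠ w) : ReflTransGen (deleteEdge E v w) a b := by
  induction hab with
  | refl => exact .refl
  | @tail b c _ hbc ih =>
    have hbw : b ≠ w := fun h => hw c (h ▸ hbc)
    exact (ih hbw).tail ⟨hbc, fun h => hb h.2⟩

theorem scc_deleteEdge (hw : isTerminal E w) (a : V) : scc (deleteEdge E v w) a = scc E a := by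
  ext b
  constructor
  · rintro ⟨hab, hba⟩
    exact ⟨ReflTransGen.mono (deleteEdge_le E v w) _ _ hab,
      ReflTransGen.mono (deleteEdge_le E v w) _ _ hba⟩
  · rintro ⟨hab, hba⟩
    by_cases hne : a = b
    · exact hne ▸ ⟨.refl, .refl⟩
    have hb : b ≠ w := by
      rintro rfl
      exact hne ((reflTransGen_iff_eq hw).1 hba)
    have ha : a ≠ w := by
      rintro rfl
      exact hne ((reflTransGen_iff_eq hw).1 hab).symm
    exact ⟨reflTransGen_deleteEdge_of_ne hw hab hb, reflTransGen_deleteEdge_of_ne hw hba ha⟩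

theorem outcome_deleteEdge [Fintype V] (hw : isTerminal E w) (v0 : V) (s : V → V) :
    outcome (deleteEdge E v w) v0 s = outcome E v0 s :=
  scc_deleteEdge hw _

theorem isTerminal_deleteEdge_iff {t : V} (ht : E v t) (htw : t ≠ w) {a : V} :
    isTerminal (deleteEdge E v w) a ↔ isTerminal E a := by
  refine ⟨fun h b hab => ?_, fun h b hab => h b hab.1⟩
  by_cases hav : a = v
  · exact h t ⟨hav ▸ ht, fun h' => htw h'.2⟩
  · exact h b ⟨hab, fun h' => hav h'.1⟩

theorem validProfile_deleteEdge_iff {t : V} (ht : E v t) (htw : t ≠ w) {s : V → V} :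
    ValidProfile (deleteEdge E v w) s ↔ ValidProfile E s ∧ s v ≠ w := by
  simp only [ValidProfile, isTerminal_deleteEdge_iff ht htw]
  constructor
  · exact fun hs => ⟨fun a => ⟨(hs a).1, fun ha => ((hs a).2 ha).1⟩,
      fun hsv => ((hs v).2 fun hv => hv t ht).2 ⟨rfl, hsv⟩⟩
  · rintro ⟨hs, hsv⟩ a
    exact ⟨(hs a).1, fun ha => ⟨(hs a).2 ha, fun ⟨hav, haw⟩ => hsv (hav ▸ haw)⟩⟩

end DeleteEdge

theorem iterate_update_eq_or_of_isFixedPt {α : Type*} [DecidableEq α] {f : α → α} {v t : α}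
    (hv : Function.IsFixedPt f (f v)) (ht : Function.IsFixedPt f t) (a : α) (n : ℕ) :
    (Function.update f v t)^[n] a = f^[n] a ∨
      (Function.update f v t)^[n] a = t ∧ f^[n] a = f v := by
  induction n with
  | zero => exact .inl rfl
  | succ n ih =>
    simp only [Function.iterate_succ_apply']
    rcases ih with h | ⟨ht', hv'⟩
    · rw [h]
      by_cases hav : f^[n] a = v
      · exact .inr ⟨by rw [hav, Function.update_self], by rw [hav]⟩
      · exact .inl (Function.update_of_ne hav _ _)
    · rw [ht', hv']
      refine .inr ⟨?_, hv⟩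
      by_cases htv : t = v
      · rw [htv, Function.update_self]
      · rw [Function.update_of_ne htv, ht]

section Redirect

variable {V : Type*} [DecidableEq V] {E : V → V → Prop} {s : V → V} {v t : V}

theorem ValidProfile.update (hs : ValidProfile E s) (ht : E v t) :
    ValidProfile E (Function.update s v t) := by
  intro a
  by_cases hav : a = v
  · subst hav
    rw [Function.update_self]
    exact ⟨fun ha => absurd ht (ha t), fun _ => ht⟩
  · rw [Function.update_of_ne hav]
    exact hs a

theorem ValidProfile.outcome_update_eq_or [Fintype V] (hs : ValidProfile E s)
    (hsv : isTerminal E (s v)) (ht : isTerminal E t) (v0 : V) :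
    outcome E v0 (Function.update s v t) = outcome E v0 s ∨
      outcome E v0 (Function.update s v t) = scc E t ∧ outcome E v0 s = scc E (s v) :=
  (iterate_update_eq_or_of_isFixedPt ((hs _).1 hsv) ((hs _).1 ht) v0 _).imp
    (congrArg (scc E)) (And.imp (congrArg (scc E)) (congrArg (scc E)))

theorem ValidProfile.apply_outcome_le_apply_outcome_update [Fintype V] {α : Type*} [Preorder α]
    {p : Set V → α} (hs : ValidProfile E s) (hsv : isTerminal E (s v)) (ht : isTerminal E t)
    (hp : p (scc E (s v)) ≤ p (scc E t)) (v0 : V) :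
    p (outcome E v0 s) ≤ p (outcome E v0 (Function.update s v t)) := by
  rcases hs.outcome_update_eq_or hsv ht v0 with h | ⟨h, h'⟩
  · rw [h]
  · rwa [h, h']

end Redirect

theorem delete_bad_terminal_move_no_new_NE_general {V : Type*} [Fintype V]
    (E : V → V → Prop) {n : ℕ} (control : V → Fin n) (v0 : V)
    (u : Fin n → Set V → ℝ) (v t t' : V) (ht : E v t) (htt' : t ≠ t')
    (hter : isTerminal E t) (hter' : isTerminal E t')
    (hu : u (control v) (scc E t') ≤ u (control v) (scc E t)) (x : V → V)
    (hx : ValidProfile (deleteEdge E v t') x)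
    (hNE : IsNE (deleteEdge E v t') control v0 u x) :
    ValidProfile E x ∧ IsNE E control v0 u x := by
  classical
  have valid_iff {s : V → V} := validProfile_deleteEdge_iff (s := s) ht htt'
  obtain ⟨hxE, hxv⟩ := valid_iff.1 hx
  simp only [IsNE, outcome_deleteEdge hter'] at hNE
  refine ⟨hxE, fun j x' hx' hagree => ?_⟩
  by_cases hx'v : x' v = t'
  · obtain rfl : control v = j := by
      by_contra hj
      exact hxv (hagree v hj ▸ hx'v)
    have redirect_valid : ValidProfile (deleteEdge E v t') (Function.update x' v t) :=
      valid_iff.2 ⟨hx'.update ht, by rwa [Function.update_self]⟩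
    have redirect_agree (a : V) (ha : control a ≠ control v) : Function.update x' v t a = x a := by
      rw [Function.update_of_ne (ne_of_apply_ne control ha), hagree a ha]
    have redirect_ge := hx'.apply_outcome_le_apply_outcome_update (hx'v ▸ hter') hter
      (hx'v.symm ▸ hu) v0
    exact redirect_ge.trans (hNE _ _ redirect_valid redirect_agree)
  · exact hNE j x' (valid_iff.2 ⟨hx', hx'v⟩) hagree

/-- Deleting the worse of two terminal moves creates no new Nash equilibrium:
if position `v` of player `i` has two terminal moves `(v,t)` and `(v,t')` with
`u(i,t) > u(i,t')`, then every Nash equilibrium of the game obtained by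
deleting the edge `(v,t')` is also a Nash equilibrium of the original game.
(In particular, if the original game is NE-free, so is the reduced game.) -/
theorem delete_bad_terminal_move_no_new_NE {V : Type*} [Fintype V]
    (E : V → V → Prop) {n : ℕ} (control : V → Fin n) (v0 : V)
    (u : Fin n → Set V → ℝ) (v t t' : V) (i : Fin n)
    (hvi : control v = i) (ht : E v t) (ht' : E v t') (htt' : t ≠ t')
    (hter : isTerminal E t) (hter' : isTerminal E t')
    (hu : u i (scc E t) > u i (scc E t')) :
    ∀ x : V → V,
      ValidProfile (fun a b => E a b ∧ ¬ (a = v ∧ b = t')) x →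
      IsNE (fun a b => E a b ∧ ¬ (a = v ∧ b = t')) control v0 u x →
      ValidProfile E x ∧ IsNE E control v0 u x := by
  subst hvi
  exact delete_bad_terminal_move_no_new_NE_general E control v0 u v t t' ht htt' hter hter' hu.le
end
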